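/- Let k ≥ 3 and q ≥ 1. If every continuous map g : Δ_k^{(k+1)(q-1)} → ℝ^k admits a Tverberg partition {S_1, …, S_q} with |S_i| ≤ k+1 for all i, then every continuous map f : Δ_{k-1}^{(k+1)(q-1)} → ℝ^k admits a winding partition. -/

import Mathlib

open scoped BigOperators

noncomputable section

/-- Euclidean space `ℝ^d`. -/
abbrev Euc (d : ℕ) : Type := EuclideanSpace ℝ (Fin d)

/-- The standard `N`-simplex `Δ^N ⊆ ℝ^{N+1}`. -/
def stdSimp (N : ℕ) : Set (Fin (N+1) → ℝ) :=
  {x | (∀ i, 0 ≤ x i) ∧ ∑ i, x i = 1}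

/-- The face `σ_S` of `Δ^N` spanned by the vertices in `S`. -/
def simpFace {N : ℕ} (S : Finset (Fin (N+1))) : Set (Fin (N+1) → ℝ) :=
  {x ∈ stdSimp N | ∀ i ∉ S, x i = 0}

/-- The `k`-skeleton `Δ_k^N` of the standard `N`-simplex. -/
def skel (N k : ℕ) : Set (Fin (N+1) → ℝ) :=
  {x ∈ stdSimp N | {i | x i ≠ 0}.ncard ≤ k + 1}

/-- A Tverberg partition for (the relevant restriction of) `f`: a set of `q`
pairwise disjoint nonempty vertex subsets whose faces have images with a common point. -/
def IsTverbergPartition (q : ℕ) {N d : ℕ}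
    (f : (Fin (N+1) → ℝ) → Euc d) (P : Finset (Finset (Fin (N+1)))) : Prop :=
  P.card = q ∧ (∀ S ∈ P, S.Nonempty) ∧
  (∀ S ∈ P, ∀ T ∈ P, S ≠ T → Disjoint S T) ∧
  (⋂ S ∈ P, f '' simpFace S).Nonempty

/-- The boundary `∂σ_S` of the face `σ_S`. -/
def simpFaceBoundary {N : ℕ} (S : Finset (Fin (N+1))) : Set (Fin (N+1) → ℝ) :=
  {x ∈ simpFace S | ∃ i ∈ S, x i = 0}

/-- `p ∈ W_{≠0}(f|_{∂σ_S})`: either `p` is in the image of the boundary, or the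
corestriction of `f|_{∂σ_S}` to `ℝ^d \ {p}` is not nullhomotopic (there is no
continuous map agreeing with `f` on `∂σ_S` that is homotopic to a constant). -/
def InWne (d : ℕ) {N : ℕ} (f : (Fin (N+1) → ℝ) → Euc d)
    (S : Finset (Fin (N+1))) (p : Euc d) : Prop :=
  p ∈ f '' simpFaceBoundary S ∨
  ¬ ∃ (g : C(↥(simpFaceBoundary S), ↥({p}ᶜ : Set (Euc d))))
      (y : ↥({p}ᶜ : Set (Euc d))),
      (∀ x : ↥(simpFaceBoundary S), (g x : Euc d) = f ↑x) ∧
      g.Homotopic (ContinuousMap.const _ y)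

/-- A winding partition (in dimension `d`) for `f` defined on the `(d-1)`-skeleton:
`q` pairwise disjoint nonempty vertex subsets, each of size at most `d+1`, together
with a winding point `p`. -/
def IsWindingPartition (d q : ℕ) {N : ℕ}
    (f : (Fin (N+1) → ℝ) → Euc d) (P : Finset (Finset (Fin (N+1)))) : Prop :=
  P.card = q ∧ (∀ S ∈ P, S.Nonempty) ∧ (∀ S ∈ P, S.card ≤ d + 1) ∧
  (∀ S ∈ P, ∀ T ∈ P, S ≠ T → Disjoint S T) ∧
  ∃ p : Euc d, ∀ S ∈ P,
    (S.card ≤ d → p ∈ f '' simpFace S) ∧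
    (S.card = d + 1 → InWne d f S p)

/-!
Approximate `f` by generic maps `F`: whenever a dimension count predicts it, pairwise disjoint faces
have images under `F` with finitely many common points. Over each `k`-face, `F` extends from the
boundary to a map missing those of these finitely many points around which the boundary does not
wind. For one point this is the definition of winding; for several, extensions missing two groups of
points at different heights are merged into one once the rays going up from the upper group and down
from the lower group have disjoint preimages, which for `k ≥ 3` holds after a small perturbation. A
Tverberg partition of the extended map is then a winding partition of `F`: its faces of dimension
less than `k` force the common point to be one of the finitely many. Finally let `F` tend to `f`:
not winding around a point is an open condition, and the faces are compact.
-/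

universe u

lemma normalSpace_of_prod_right {Y X : Type*} [TopologicalSpace Y] [TopologicalSpace X] [T1Space Y]
    [Nonempty Y] [NormalSpace (Y × X)] : NormalSpace X :=
  (Topology.IsClosedEmbedding.of_continuous_injective_isClosedMap (by fun_prop)
    (Prod.mk_right_injective _) (isClosedMap_prodMk_left (Classical.arbitrary Y))).normalSpace

section ExtendsAvoiding

variable {A : Type*} {X : Type u} {E : Type*} [TopologicalSpace X] [TopologicalSpace E] {ι : A → X}

/-- The map `f : A → E` extends along `ι : A → X` to a continuous map missing `P`. For the inclusion
of a sphere into a ball and `P = {p}`, this is the vanishing of the winding class of `f` at `p`. -/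
def ExtendsAvoiding (ι : A → X) (f : A → E) (P : Set E) : Prop :=
  ∃ G : C(X, E), (∀ a, G (ι a) = f a) ∧ ∀ x, G x ∉ P

lemma ExtendsAvoiding.image_homeomorph {F : Type*} [TopologicalSpace F] {f : A → E} {P : Set E}
    (h : ExtendsAvoiding ι f P) (φ : E ≃ₜ F) : ExtendsAvoiding ι (φ ∘ f) (φ '' P) := by
  obtain ⟨G, hGf, hGP⟩ := h
  exact ⟨⟨φ ∘ G, by fun_prop⟩, fun a => congrArg φ (hGf a), fun x => by simpa using hGP x⟩

lemma extendsAvoiding_image_homeomorph_iff {F : Type*} [TopologicalSpace F] {f : A → E} {P : Set E}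
    (φ : E ≃ₜ F) : ExtendsAvoiding ι (φ ∘ f) (φ '' P) ↔ ExtendsAvoiding ι f P := by
  refine ⟨fun h => ?_, fun h => h.image_homeomorph φ⟩
  simpa [Function.comp_def, Set.image_image] using h.image_homeomorph φ.symm

lemma ExtendsAvoiding.of_homotopy [TopologicalSpace A] [NormalSpace (unitInterval × X)]
    [AddCommGroup E] [IsTopologicalAddGroup E] [TietzeExtension.{u} E]
    (hι : Topology.IsClosedEmbedding ι) {P : Set E} (hP : IsClosed P)
    (H : C(unitInterval × A, E)) (hH : ∀ z, H z ∉ P)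
    (h₀ : ExtendsAvoiding ι (fun a => H (0, a)) P) :
    ExtendsAvoiding ι (fun a => H (1, a)) P := by
  have : NormalSpace X := normalSpace_of_prod_right (Y := unitInterval)
  obtain ⟨G₀, hG₀, hG₀P⟩ := h₀
  obtain ⟨F, hF⟩ := ContinuousMap.exists_extension (Topology.IsClosedEmbedding.id.prodMap hι) H
  replace hF : ∀ t a, F (t, ι a) = H (t, a) := fun t a => DFunLike.congr_fun hF (t, a)
  -- the correction makes the extended homotopy start at `G₀`
  let K : C(unitInterval × X, E) := ⟨fun z => F z - F (0, z.2) + G₀ z.2, by fun_prop⟩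
  have hK₀ : ∀ x, K (0, x) = G₀ x := fun x => by simp [K]
  have hKι : ∀ t a, K (t, ι a) = H (t, a) := fun t a => by simp [K, hF, hG₀]
  have hbad : IsClosed (Prod.snd '' (K ⁻¹' P)) :=
    isClosedMap_snd_of_compactSpace _ (hP.preimage K.continuous)
  obtain ⟨l, hl₀, hl₁, hl⟩ := exists_continuous_zero_one_of_isClosed hbad hι.isClosed_range <| by
    refine Set.disjoint_right.2 ?_
    rintro _ ⟨a, rfl⟩ ⟨⟨t, x⟩, hx, rfl : x = ι a⟩
    exact hH (t, a) (hKι t a ▸ hx)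
  let s : C(X, unitInterval) := ⟨fun x => ⟨l x, hl x⟩, by fun_prop⟩
  refine ⟨⟨fun x => K (s x, x), by fun_prop⟩, fun a => ?_, fun x hx => ?_⟩
  · have : s (ι a) = 1 := Subtype.ext (hl₁ ⟨a, rfl⟩)
    simp [this, hKι]
  · have : s x = 0 := Subtype.ext (hl₀ ⟨_, hx, rfl⟩)
    exact hG₀P x (by simpa [this, hK₀] using hx)

end ExtendsAvoiding

section Bridge

variable {W : Type*}

/-- The vertical half-lines in `ℝ × W` going up from the points of `P`. -/
def upperRays (P : Set (ℝ × W)) : Set (ℝ × W) :=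
  ⋃ p ∈ P, Set.Ici p.1 ×ˢ {p.2}

/-- The vertical half-lines in `ℝ × W` going down from the points of `Q`. -/
def lowerRays (Q : Set (ℝ × W)) : Set (ℝ × W) :=
  ⋃ q ∈ Q, Set.Iic q.1 ×ˢ {q.2}

lemma mem_upperRays {P : Set (ℝ × W)} {y : ℝ × W} :
    y ∈ upperRays P ↔ ∃ s ≤ y.1, (s, y.2) ∈ P := by
  simp [upperRays, Set.mem_prod, and_comm]

lemma mem_lowerRays {Q : Set (ℝ × W)} {y : ℝ × W} :
    y ∈ lowerRays Q ↔ ∃ s ≥ y.1, (s, y.2) ∈ Q := by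
  simp [lowerRays, Set.mem_prod, and_comm]

lemma isClosed_upperRays [TopologicalSpace W] [T1Space W] {P : Set (ℝ × W)} (hP : P.Finite) :
    IsClosed (upperRays P) :=
  hP.isClosed_biUnion fun _ _ => isClosed_Ici.prod isClosed_singleton

lemma isClosed_lowerRays [TopologicalSpace W] [T1Space W] {Q : Set (ℝ × W)} (hQ : Q.Finite) :
    IsClosed (lowerRays Q) :=
  hQ.isClosed_biUnion fun _ _ => isClosed_Iic.prod isClosed_singleton

variable [NormedAddCommGroup W] [NormedSpace ℝ W]

/-- The path from `y` to `y'` in `ℝ × W`, with parameter `u ∈ [0, 1]`, that descends to height `c`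
for `u ≤ 1/3`, then moves horizontally, and for `2/3 ≤ u` descends from height `c`. It starts at
`y` only if `c ≤ y.1`, and ends at `y'` only if `y'.1 ≤ c`. -/
def bridge (c u : ℝ) (y y' : ℝ × W) : ℝ × W :=
  (c + max 0 (1 - 3 * u) * max 0 (y.1 - c) - max 0 (3 * u - 2) * max 0 (c - y'.1),
    AffineMap.lineMap y.2 y'.2 (max 0 (min 1 (3 * u - 1))))

variable {c u : ℝ} {y y' : ℝ × W}

lemma bridge_of_lt_fst (hu : 0 ≤ u) (h : c < (bridge c u y y').1) :
    (bridge c u y y').1 ≤ y.1 ∧ (bridge c u y y').2 = y.2 := by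
  rcases le_total u (1 / 3) with hu' | hu'
  · have h₁ : max 0 (1 - 3 * u) = 1 - 3 * u := max_eq_right (by linarith)
    have h₂ : max 0 (3 * u - 2) = 0 := max_eq_left (by linarith)
    have h₃ : min 1 (3 * u - 1) = 3 * u - 1 := min_eq_right (by linarith)
    have h₄ : max 0 (3 * u - 1) = 0 := max_eq_left (by linarith)
    simp only [bridge, h₁, h₂, h₃, h₄, zero_mul, sub_zero, AffineMap.lineMap_apply_zero, and_true]
      at h ⊢
    rcases max_cases 0 (y.1 - c) with ⟨h₅, h₆⟩ | ⟨h₅, h₆⟩ <;> rw [h₅] at h ⊢ <;> nlinarith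
  · have h₁ : max 0 (1 - 3 * u) = 0 := max_eq_left (by linarith)
    have : 0 ≤ max 0 (3 * u - 2) * max 0 (c - y'.1) := by positivity
    simp only [bridge, h₁] at h
    linarith

lemma bridge_of_fst_lt (hu : u ≤ 1) (h : (bridge c u y y').1 < c) :
    y'.1 ≤ (bridge c u y y').1 ∧ (bridge c u y y').2 = y'.2 := by
  rcases le_total (2 / 3) u with hu' | hu'
  · have h₁ : max 0 (1 - 3 * u) = 0 := max_eq_left (by linarith)
    have h₂ : max 0 (3 * u - 2) = 3 * u - 2 := max_eq_right (by linarith)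
    have h₃ : min 1 (3 * u - 1) = 1 := min_eq_left (by linarith)
    simp only [bridge, h₁, h₂, h₃, zero_mul, add_zero, zero_le_one, sup_of_le_right,
      AffineMap.lineMap_apply_one, and_true] at h ⊢
    rcases max_cases 0 (c - y'.1) with ⟨h₄, h₅⟩ | ⟨h₄, h₅⟩ <;> rw [h₄] at h ⊢ <;> nlinarith
  · have h₁ : max 0 (3 * u - 2) = 0 := max_eq_left (by linarith)
    have : 0 ≤ max 0 (1 - 3 * u) * max 0 (y.1 - c) := by positivity
    simp only [bridge, h₁] at h
    linarith

lemma bridge_zero (h : c ≤ y.1) : bridge c 0 y y' = y := by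
  ext <;> simp [bridge, h]

lemma bridge_one (h : y'.1 ≤ c) : bridge c 1 y y' = y' := by
  ext
  · have : max 0 ((3 : ℝ) - 2) = 1 := by norm_num
    simp [bridge, h, this]
  · have : min (1 : ℝ) (3 - 1) = 1 := by norm_num
    simp [bridge, this]

variable {t : ℝ} {P Q : Set (ℝ × W)}

lemma bridge_notMem_of_lt (hP : ∀ p ∈ P, c < p.1) (hu : 0 ≤ u) (hy : y ∉ P)
    (hray : y ∈ upperRays P → u = 0) : bridge c u y y' ∉ P := by
  intro hmem
  obtain ⟨hle, heq⟩ := bridge_of_lt_fst hu (hP _ hmem)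
  obtain rfl : u = 0 := hray (mem_upperRays.2 ⟨_, hle, heq ▸ hmem⟩)
  exact hy (bridge_zero ((hP _ hmem).le.trans hle) ▸ hmem)

lemma bridge_notMem_of_gt (hQ : ∀ q ∈ Q, q.1 < c) (hu : u ≤ 1) (hy : y' ∉ Q)
    (hray : y' ∈ lowerRays Q → u = 1) : bridge c u y y' ∉ Q := by
  intro hmem
  obtain ⟨hle, heq⟩ := bridge_of_fst_lt hu (hQ _ hmem)
  obtain rfl : u = 1 := hray (mem_lowerRays.2 ⟨_, hle, heq ▸ hmem⟩)
  exact hy (bridge_one (hle.trans (hQ _ hmem).le) ▸ hmem)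

lemma lineMap_bridge_self_snd : (AffineMap.lineMap (bridge c u y y) y t).2 = y.2 := by
  simp [bridge, AffineMap.snd_lineMap]

lemma lineMap_bridge_self_notMem_of_lt (hP : ∀ p ∈ P, c < p.1) (hu : 0 ≤ u)
    (ht : t ∈ Set.Icc 0 1) (hy : y ∉ P) (hray : y ∈ upperRays P → u = 0) :
    AffineMap.lineMap (bridge c u y y) y t ∉ P := by
  intro hmem
  set z := AffineMap.lineMap (bridge c u y y) y t with hz
  have hcz := hP z hmem
  have hz₁ : z.1 = AffineMap.lineMap (bridge c u y y).1 y.1 t := AffineMap.fst_lineMap ..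
  have hle : z.1 ≤ y.1 := by
    by_contra! hlt
    have : (bridge c u y y).1 < z.1 := by
      by_contra! hle
      exact (hlt.trans_le hle).not_ge (bridge_of_lt_fst hu (hcz.trans_le hle)).1
    exact (((convex_Iio z.1).lineMap_mem this hlt ht).trans_eq' hz₁).false
  obtain rfl : u = 0 :=
    hray (mem_upperRays.2 ⟨z.1, hle, by rwa [← lineMap_bridge_self_snd (t := t)]⟩)
  rw [bridge_zero (hcz.le.trans hle), AffineMap.lineMap_same_apply] at hz
  exact hy (hz ▸ hmem)

lemma lineMap_bridge_self_notMem_of_gt (hQ : ∀ q ∈ Q, q.1 < c) (hu : u ≤ 1)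
    (ht : t ∈ Set.Icc 0 1) (hy : y ∉ Q) (hray : y ∈ lowerRays Q → u = 1) :
    AffineMap.lineMap (bridge c u y y) y t ∉ Q := by
  intro hmem
  set z := AffineMap.lineMap (bridge c u y y) y t with hz
  have hcz := hQ z hmem
  have hz₁ : z.1 = AffineMap.lineMap (bridge c u y y).1 y.1 t := AffineMap.fst_lineMap ..
  have hle : y.1 ≤ z.1 := by
    by_contra! hlt
    have : z.1 < (bridge c u y y).1 := by
      by_contra! hle
      exact (hle.trans_lt hlt).not_ge (bridge_of_fst_lt hu (hle.trans_lt hcz)).1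
    exact (hz₁.trans_gt ((convex_Ioi z.1).lineMap_mem this hlt ht)).false
  obtain rfl : u = 1 :=
    hray (mem_lowerRays.2 ⟨z.1, hle, by rwa [← lineMap_bridge_self_snd (t := t)]⟩)
  rw [bridge_one (hle.trans hcz.le), AffineMap.lineMap_same_apply] at hz
  exact hy (hz ▸ hmem)

lemma extendsAvoiding_union_of_disjoint_rays {A : Type*} {X : Type u} [TopologicalSpace A]
    [TopologicalSpace X] [NormalSpace (unitInterval × X)] [FiniteDimensional ℝ W]
    {ι : A → X} (hι : Topology.IsClosedEmbedding ι)
    {a b : C(X, ℝ × W)} (hab : ∀ s, b (ι s) = a (ι s))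
    (hPfin : P.Finite) (hQfin : Q.Finite) (hP : ∀ p ∈ P, c < p.1) (hQ : ∀ q ∈ Q, q.1 < c)
    (haP : ∀ x, a x ∉ P) (hbQ : ∀ x, b x ∉ Q)
    (hrays : Disjoint (a ⁻¹' upperRays P) (b ⁻¹' lowerRays Q)) :
    ExtendsAvoiding ι (a ∘ ι) (P ∪ Q) := by
  have : TietzeExtension.{u} W := .of_tvs ℝ
  have : NormalSpace X := normalSpace_of_prod_right (Y := unitInterval)
  obtain ⟨u, hu₀, hu₁, hu⟩ := exists_continuous_zero_one_of_isClosed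
    ((isClosed_upperRays hPfin).preimage a.continuous)
    ((isClosed_lowerRays hQfin).preimage b.continuous) hrays
  let C : C(X, ℝ × W) := ⟨fun x => bridge c (u x) (a x) (b x), by unfold bridge; fun_prop⟩
  have hC : ∀ x, C x ∉ P ∪ Q := fun x => not_or.2
    ⟨bridge_notMem_of_lt hP (hu x).1 (haP x) fun h => hu₀ h,
      bridge_notMem_of_gt hQ (hu x).2 (hbQ x) fun h => hu₁ h⟩
  have hCι : ∀ s, C (ι s) = bridge c (u (ι s)) (a (ι s)) (a (ι s)) := fun s => by simp [C, hab]
  let H : C(unitInterval × A, ℝ × W) :=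
    ⟨fun z => AffineMap.lineMap (C (ι z.2)) (a (ι z.2)) (z.1 : ℝ),
      by have := hι.continuous; fun_prop⟩
  have hH : ∀ z, H z ∉ P ∪ Q := fun ⟨t, s⟩ => by
    simp only [H, ContinuousMap.coe_mk, hCι]
    exact not_or.2
      ⟨lineMap_bridge_self_notMem_of_lt hP (hu _).1 t.2 (haP _) fun h => hu₀ h,
        lineMap_bridge_self_notMem_of_gt hQ (hu _).2 t.2 (hab s ▸ hbQ (ι s))
          fun h => hu₁ (show b (ι s) ∈ _ from (hab s).symm ▸ h)⟩
  simpa [H, Function.comp_def] using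
    ExtendsAvoiding.of_homotopy hι (hPfin.union hQfin).isClosed H hH ⟨C, fun s => by simp [H], hC⟩

end Bridge

section GeneralPosition

variable {X V : Type*} [TopologicalSpace X]
  [NormedAddCommGroup V] [NormedSpace ℝ V] [FiniteDimensional ℝ V]

lemma exists_perturbation_avoiding {F : Type*} [NormedAddCommGroup F] [NormedSpace ℝ F]
    [FiniteDimensional ℝ F] {e : X → V} (he : Topology.IsClosedEmbedding e)
    (hVF : Module.finrank ℝ V < Module.finrank ℝ F) (f : C(X, F)) {T : Set F} (hT : T.Countable)
    {ε : ℝ} (hε : 0 < ε) : ∃ f' : C(X, F), (∀ x, ‖f' x - f x‖ < ε) ∧ ∀ x, f' x ∉ T := by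
  have : TietzeExtension F := .of_tvs ℝ
  obtain ⟨f₁, hf₁⟩ := ContinuousMap.exists_extension he f
  obtain ⟨g, hg, hgf₁, -⟩ := f₁.continuous.exists_contDiff_approx 1
    (continuous_const (y := ε / 2)) fun _ => half_pos hε
  have hdense : Dense (⋃ t ∈ T, Set.range fun v => t - g v)ᶜ := by
    refine dense_compl_of_dimH_lt_finrank ?_
    rw [dimH_bUnion hT]
    exact (iSup₂_le fun t _ => (contDiff_const.sub hg).dimH_range_le).trans_lt (Nat.cast_lt.2 hVF)
  obtain ⟨w, hw, hwε⟩ := hdense.exists_dist_lt 0 (half_pos hε)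
  refine ⟨⟨fun x => g (e x) + w, (hg.continuous.comp he.continuous).add continuous_const⟩,
    fun x => ?_, fun x hx => hw (Set.mem_biUnion hx ⟨e x, by simp⟩)⟩
  have hgx : ‖g (e x) - f x‖ < ε / 2 := by
    simpa [← dist_eq_norm, ← DFunLike.congr_fun hf₁ x] using hgf₁ (e x)
  calc ‖g (e x) + w - f x‖ = ‖(g (e x) - f x) + w‖ := by congr 1; abel
    _ ≤ ‖g (e x) - f x‖ + ‖w‖ := norm_add_le _ _
    _ < ε := by rw [dist_zero_left] at hwε; linarith

lemma exists_pos_forall_norm_sub_lt_notMem [CompactSpace X] {E : Type*} [SeminormedAddCommGroup E]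
    (a : C(X, E)) {P : Set E} (hP : IsClosed P) (ha : ∀ x, a x ∉ P) :
    ∃ ε > 0, ∀ x y, ‖y - a x‖ < ε → y ∉ P := by
  obtain ⟨ε, hε, h⟩ := (isCompact_range a.continuous).exists_thickening_subset_open
    hP.isOpen_compl (by rintro _ ⟨x, rfl⟩; exact ha x)
  exact ⟨ε, hε, fun x y hy => h (Metric.mem_thickening_iff.2 ⟨a x, ⟨x, rfl⟩, by
    rwa [dist_eq_norm]⟩)⟩

variable {W : Type*} [NormedAddCommGroup W] [NormedSpace ℝ W]

lemma norm_mk_lineMap_sub_le (y : ℝ × W) (w : W) {t : ℝ} (ht : t ∈ Set.Icc 0 1) :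
    ‖(y.1, AffineMap.lineMap y.2 w t) - y‖ ≤ ‖w - y.2‖ := by
  have : (y.1, AffineMap.lineMap y.2 w t) - y = (0, t • (w - y.2)) := by
    ext <;> simp [AffineMap.lineMap_apply]
  rw [this, Prod.norm_mk, norm_zero, max_eq_right (norm_nonneg _), norm_smul,
    Real.norm_of_nonneg ht.1]
  exact mul_le_of_le_one_left (norm_nonneg _) ht.2

variable [CompactSpace X] {e : X → V} {P Q : Set (ℝ × W)} {c₁ c₂ : ℝ} [FiniteDimensional ℝ W]

/- A point lying over `P` and under `Q` has its pair of horizontal coordinates in the finite set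
`(Prod.snd '' P) ×ˢ (Prod.snd '' Q)`, which can be avoided in `W × W` for dimension reasons. -/
lemma exists_eqOn_disjoint_rays (he : Topology.IsClosedEmbedding e)
    (hVW : Module.finrank ℝ V < 2 * Module.finrank ℝ W) {S : Set X} (hS : IsClosed S)
    {a b : C(X, ℝ × W)} (hab : Set.EqOn a b S) (hPfin : P.Finite) (hQfin : Q.Finite)
    (hc : c₁ < c₂) (hP : ∀ p ∈ P, c₂ ≤ p.1) (hQ : ∀ q ∈ Q, q.1 ≤ c₁)
    (ha : ∀ x, a x ∉ P) (hb : ∀ x, b x ∉ Q) :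
    ∃ a' b' : C(X, ℝ × W), Set.EqOn a' a S ∧ Set.EqOn b' b S ∧ (∀ x, a' x ∉ P) ∧ (∀ x, b' x ∉ Q) ∧
      Disjoint (a' ⁻¹' upperRays P) (b' ⁻¹' lowerRays Q) := by
  have : T2Space X := he.isEmbedding.t2Space
  obtain ⟨ε₁, hε₁, haP⟩ := exists_pos_forall_norm_sub_lt_notMem a hPfin.isClosed ha
  obtain ⟨ε₂, hε₂, hbQ⟩ := exists_pos_forall_norm_sub_lt_notMem b hQfin.isClosed hb
  obtain ⟨w, hwε, hw⟩ := exists_perturbation_avoiding he (by rw [Module.finrank_prod]; omega)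
    ⟨fun x => ((a x).2, (b x).2), by fun_prop⟩
    ((hPfin.image Prod.snd).prod (hQfin.image Prod.snd)).countable (lt_min hε₁ hε₂)
  have hK : IsClosed {x | c₂ ≤ (a x).1 ∧ (b x).1 ≤ c₁} :=
    (isClosed_Ici.preimage (continuous_fst.comp a.continuous)).inter
      (isClosed_Iic.preimage (continuous_fst.comp b.continuous))
  obtain ⟨η, hη₀, hη₁, hη⟩ := exists_continuous_zero_one_of_isClosed hS hK
    (Set.disjoint_left.2 fun x hx hx' => by linarith [hx'.1.trans_eq (congrArg Prod.fst (hab hx)),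
      hx'.2])
  refine ⟨⟨fun x => ((a x).1, AffineMap.lineMap (a x).2 (w x).1 (η x)), by fun_prop⟩,
    ⟨fun x => ((b x).1, AffineMap.lineMap (b x).2 (w x).2 (η x)), by fun_prop⟩,
    fun x hx => by simp [hη₀ hx], fun x hx => by simp [hη₀ hx],
    fun x => haP x _ ?_, fun x => hbQ x _ ?_, Set.disjoint_left.2 fun x hxa hxb => ?_⟩
  · exact (norm_mk_lineMap_sub_le _ _ (hη x)).trans_lt <|
      (norm_fst_le (w x - _)).trans_lt ((hwε x).trans_le (min_le_left _ _))
  · exact (norm_mk_lineMap_sub_le _ _ (hη x)).trans_lt <|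
      (norm_snd_le (w x - _)).trans_lt ((hwε x).trans_le (min_le_right _ _))
  · obtain ⟨s, hs, hsP⟩ := mem_upperRays.1 hxa
    obtain ⟨t, ht, htQ⟩ := mem_lowerRays.1 hxb
    have hηx : η x = 1 := hη₁ ⟨(hP _ hsP).trans hs, ht.le.trans (hQ _ htQ)⟩
    exact hw x ⟨⟨_, hsP, by simp [hηx]⟩, ⟨_, htQ, by simp [hηx]⟩⟩

end GeneralPosition

section AvoidingFinset

variable {A : Type*} {X : Type u} {V : Type*} [TopologicalSpace A] [TopologicalSpace X]
  [CompactSpace X] [NormedAddCommGroup V] [NormedSpace ℝ V] [FiniteDimensional ℝ V]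
  {ι : A → X} {e : X → V}

lemma ExtendsAvoiding.union_of_separated {W : Type*} [NormedAddCommGroup W] [NormedSpace ℝ W]
    [FiniteDimensional ℝ W] (hι : Topology.IsClosedEmbedding ι) (he : Topology.IsClosedEmbedding e)
    (hVW : Module.finrank ℝ V < 2 * Module.finrank ℝ W) {f : A → ℝ × W} {P Q : Set (ℝ × W)}
    (hPfin : P.Finite) (hQfin : Q.Finite) {c₁ c₂ : ℝ} (hc : c₁ < c₂) (hPc : ∀ p ∈ P, c₂ ≤ p.1)
    (hQc : ∀ q ∈ Q, q.1 ≤ c₁) (hP : ExtendsAvoiding ι f P) (hQ : ExtendsAvoiding ι f Q) :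
    ExtendsAvoiding ι f (P ∪ Q) := by
  have : T2Space X := he.isEmbedding.t2Space
  obtain ⟨a, haf, haP⟩ := hP
  obtain ⟨b, hbf, hbQ⟩ := hQ
  obtain ⟨a', b', ha', hb', haP', hbQ', hrays⟩ := exists_eqOn_disjoint_rays he hVW
    hι.isClosed_range (by rintro _ ⟨s, rfl⟩; rw [haf, hbf]) hPfin hQfin hc hPc hQc haP hbQ
  replace ha' : ∀ s, a' (ι s) = f s := fun s => (ha' ⟨s, rfl⟩).trans (haf s)
  replace hb' : ∀ s, b' (ι s) = f s := fun s => (hb' ⟨s, rfl⟩).trans (hbf s)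
  obtain ⟨m, hm₁, hm₂⟩ := exists_between hc
  have := extendsAvoiding_union_of_disjoint_rays hι (fun s => (hb' s).trans (ha' s).symm) hPfin
    hQfin (fun p hp => hm₂.trans_le (hPc p hp)) (fun q hq => (hQc q hq).trans_lt hm₁) haP' hbQ'
    hrays
  rwa [show a' ∘ ι = f from funext ha'] at this

lemma exists_continuousLinearEquiv_prod_ker {E : Type*} [NormedAddCommGroup E] [NormedSpace ℝ E]
    {φ : E →L[ℝ] ℝ} (hφ : φ ≠ 0) : ∃ e : E ≃L[ℝ] ℝ × φ.ker, ∀ x, (e x).1 = φ x := by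
  obtain ⟨v, hv⟩ : ∃ v, φ v = 1 :=
    LinearMap.surjective (f := φ.toLinearMap) (by exact_mod_cast hφ) 1
  exact ⟨.equivOfRightInverse φ (.toSpanSingleton ℝ v) fun t => by simp [hv], fun x => rfl⟩

lemma ExtendsAvoiding.of_filter_lt_of_filter_le {E : Type*} [NormedAddCommGroup E]
    [NormedSpace ℝ E] [FiniteDimensional ℝ E] (hι : Topology.IsClosedEmbedding ι)
    (he : Topology.IsClosedEmbedding e)
    (hVE : Module.finrank ℝ V + 2 < 2 * Module.finrank ℝ E) {f : A → E} {P : Finset E}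
    {φ : E →L[ℝ] ℝ} (hφ : φ ≠ 0) {c : ℝ}
    (hupper : ExtendsAvoiding ι f (P.filter (c < φ ·)))
    (hlower : ExtendsAvoiding ι f (P.filter (φ · ≤ c))) : ExtendsAvoiding ι f P := by
  have hsplit : (P : Set E) = ↑(P.filter (c < φ ·)) ∪ ↑(P.filter (φ · ≤ c)) := by
    ext s
    simp [← and_or_left, lt_or_ge]
  rcases (P.filter (c < φ ·)).eq_empty_or_nonempty with hempty | hne
  · rwa [hsplit, hempty, Finset.coe_empty, Set.empty_union]
  obtain ⟨r, hr, hrmin⟩ := (P.filter (c < φ ·)).exists_min_image φ hne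
  obtain ⟨ψ, hψ⟩ := exists_continuousLinearEquiv_prod_ker hφ
  have hrank : Module.finrank ℝ E = 1 + Module.finrank ℝ φ.ker := by
    simpa using ψ.toLinearEquiv.finrank_eq
  rw [← extendsAvoiding_image_homeomorph_iff ψ.toHomeomorph] at hupper hlower ⊢
  rw [hsplit, Set.image_union]
  refine hupper.union_of_separated hι he (by omega) ((Finset.finite_toSet _).image _)
    ((Finset.finite_toSet _).image _) (Finset.mem_filter.1 hr).2 ?_ ?_ hlower
  · rintro _ ⟨s, hs, rfl⟩
    exact (hrmin s hs).trans_eq (hψ s).symm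
  · rintro _ ⟨s, hs, rfl⟩
    exact (hψ s).trans_le (Finset.mem_filter.1 hs).2

lemma extendsAvoiding_finset {E : Type*} [NormedAddCommGroup E] [NormedSpace ℝ E]
    [FiniteDimensional ℝ E] (hι : Topology.IsClosedEmbedding ι) (he : Topology.IsClosedEmbedding e)
    (hVE : Module.finrank ℝ V + 2 < 2 * Module.finrank ℝ E) {f : A → E} (hf : Continuous f)
    {P : Finset E} (hP : ∀ p ∈ P, ExtendsAvoiding ι f {p}) : ExtendsAvoiding ι f P := by
  induction P using Finset.strongInduction with
  | H P ih =>
  rcases P.eq_empty_or_nonempty with rfl | hne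
  · have : T2Space X := he.isEmbedding.t2Space
    have : TietzeExtension.{u} E := .of_tvs ℝ
    obtain ⟨G, hG⟩ := ContinuousMap.exists_extension hι ⟨f, hf⟩
    exact ⟨G, fun a => DFunLike.congr_fun hG a, by simp⟩
  rcases hne.exists_eq_singleton_or_nontrivial with ⟨p, rfl⟩ | ⟨p, hp, q, hq, hpq⟩
  · simpa using hP p
  obtain ⟨φ, hφ⟩ := SeparatingDual.exists_separating_of_ne (R := ℝ) hpq
  wlog hlt : φ q < φ p generalizing p q
  · exact this q hq p hp hpq.symm hφ.symm (hφ.lt_or_gt.resolve_right hlt)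
  exact ExtendsAvoiding.of_filter_lt_of_filter_le hι he hVE (φ := φ) (c := φ q)
    (by rintro rfl; simp at hφ)
    (ih _ (Finset.filter_ssubset.2 ⟨q, hq, lt_irrefl _⟩)
      fun s hs => hP s (Finset.mem_filter.1 hs).1)
    (ih _ (Finset.filter_ssubset.2 ⟨p, hp, hlt.not_ge⟩)
      fun s hs => hP s (Finset.mem_filter.1 hs).1)

end AvoidingFinset

section ParametricTransversality

variable {V Y Z : Type*} [NormedAddCommGroup V] [NormedSpace ℝ V]
  [NormedAddCommGroup Y] [NormedSpace ℝ Y] [NormedAddCommGroup Z] [NormedSpace ℝ Z]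

/- Precomposing with a linear surjection `L : Z → Y` reduces to the case `Y = Z` of Sard's lemma. -/
lemma addHaar_image_not_injective_fderiv_eq_zero [FiniteDimensional ℝ Y] [FiniteDimensional ℝ Z]
    [MeasurableSpace Z] [BorelSpace Z] (μ : MeasureTheory.Measure Z) [μ.IsAddHaarMeasure]
    (hYZ : Module.finrank ℝ Y ≤ Module.finrank ℝ Z) {F : Y → Z} (hF : Differentiable ℝ F) :
    μ (F '' {y | ¬ Function.Injective (fderiv ℝ F y)}) = 0 := by
  obtain ⟨J, hJ⟩ : ∃ J : Y →ₗ[ℝ] Z, Function.Injective J :=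
    finrank_le_iff_exists_linearMap.mp hYZ
  obtain ⟨L₀, hL₀⟩ := J.exists_leftInverse_of_injective (LinearMap.ker_eq_bot.2 hJ)
  let L : Z →L[ℝ] Y := L₀.toContinuousLinearMap
  have hL : Function.Surjective L := fun y => ⟨J y, DFunLike.congr_fun hL₀ y⟩
  have hFL : ∀ z, fderiv ℝ (F ∘ L) z = (fderiv ℝ F (L z)).comp L := fun z => by
    rw [fderiv_comp z (hF _) L.differentiableAt, L.fderiv]
  refine MeasureTheory.measure_mono_null (t := (F ∘ L) '' {z | (fderiv ℝ (F ∘ L) z).det = 0}) ?_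
    (MeasureTheory.addHaar_image_eq_zero_of_det_fderivWithin_eq_zero μ
      (fun z _ => (hF.comp L.differentiable z).hasFDerivAt.hasFDerivWithinAt) fun _ hz => hz)
  rintro _ ⟨y, hy, rfl⟩
  obtain ⟨z, rfl⟩ := hL y
  refine ⟨z, by_contra fun hdet => hy ?_, rfl⟩
  have hinj : Function.Injective (fderiv ℝ (F ∘ L) z) :=
    ((Module.End.isUnit_iff _).1
      ((LinearMap.isUnit_iff_isUnit_det _).2 (isUnit_iff_ne_zero.2 hdet))).injective
  rw [hFL] at hinj
  refine (injective_iff_map_eq_zero _).2 fun y hy0 => ?_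
  obtain ⟨w, rfl⟩ := hL y
  rw [hinj (hy0.trans (map_zero _).symm), map_zero]

/-- The parameters `v` for which `Ψ (v, ·)` has a degenerate zero in `K`. -/
def irregularParams (Ψ : V × Y → Z) (K : Set Y) : Set V :=
  {v | ∃ y ∈ K, Ψ (v, y) = 0 ∧ ¬ Function.Injective (fderiv ℝ (fun y => Ψ (v, y)) y)}

variable {Ψ : V × Y → Z} {K : Set Y}

lemma fderiv_prodMk_left_apply (hΨ : Differentiable ℝ Ψ) (v : V) (y z : Y) :
    fderiv ℝ (fun y => Ψ (v, y)) y z = fderiv ℝ Ψ (v, y) (0, z) := by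
  have h := (hΨ (v, y)).hasFDerivAt.comp y (hasFDerivAt_prodMk_right v y)
  exact (DFunLike.congr_fun h.fderiv z).trans (by simp)

lemma mem_irregularParams_iff (hΨ : Differentiable ℝ Ψ) {v : V} :
    v ∈ irregularParams Ψ K ↔ ∃ y ∈ K, ∃ z ∈ Metric.sphere (0 : Y) 1,
      Ψ (v, y) = 0 ∧ fderiv ℝ Ψ (v, y) (0, z) = 0 := by
  simp only [irregularParams, injective_iff_map_eq_zero, fderiv_prodMk_left_apply hΨ]
  refine exists_congr fun y => and_congr_right fun _ => ⟨fun ⟨h₀, hinj⟩ => ?_, ?_⟩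
  · push Not at hinj
    obtain ⟨z, hz, hz₀⟩ := hinj
    refine ⟨‖z‖⁻¹ • z, by simp [norm_smul, hz₀], h₀, ?_⟩
    rw [← fderiv_prodMk_left_apply hΨ, map_smul, fderiv_prodMk_left_apply hΨ, hz, smul_zero]
  · rintro ⟨z, hz, h₀, hd⟩
    exact ⟨h₀, fun hinj => Metric.ne_of_mem_sphere hz one_ne_zero (hinj z hd)⟩

lemma isClosed_irregularParams [FiniteDimensional ℝ Y] (hΨ : ContDiff ℝ 1 Ψ) (hK : IsCompact K) :
    IsClosed (irregularParams Ψ K) := by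
  let D := K ×ˢ Metric.sphere (0 : Y) 1
  have : CompactSpace D := isCompact_iff_compactSpace.1 (hK.prod (isCompact_sphere _ _))
  have hclosed : IsClosed {w : V × D | Ψ (w.1, w.2.1.1) = 0 ∧
      fderiv ℝ Ψ (w.1, w.2.1.1) (0, w.2.1.2) = 0} := by
    have hΨ' := hΨ.continuous_fderiv one_ne_zero
    exact (isClosed_eq (by fun_prop) continuous_const).inter
      (isClosed_eq ((hΨ'.comp (by fun_prop)).clm_apply (by fun_prop)) continuous_const)
  convert isClosedMap_fst_of_compactSpace _ hclosed using 1
  ext v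
  rw [mem_irregularParams_iff (hΨ.differentiable one_ne_zero)]
  constructor
  · rintro ⟨y, hy, z, hz, h⟩
    exact ⟨(v, ⟨(y, z), hy, hz⟩), h, rfl⟩
  · rintro ⟨⟨v, ⟨⟨y, z⟩, hy, hz⟩⟩, h, rfl⟩
    exact ⟨y, hy, z, hz, h⟩

/- Along `v + τ (-z)` the zeros of `Ψ` are the points where `Ψ (v, ·)` takes the value `z`, and by
Sard's lemma almost every `z` is a regular value. -/
lemma interior_irregularParams_eq_empty [FiniteDimensional ℝ Y] [FiniteDimensional ℝ Z]
    (hΨ : Differentiable ℝ Ψ) (hYZ : Module.finrank ℝ Y ≤ Module.finrank ℝ Z) {τ : Z → V}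
    (hτ : Continuous τ) (hτ₀ : τ 0 = 0) (hτΨ : ∀ v z y, Ψ (v + τ z, y) = Ψ (v, y) + z) :
    interior (irregularParams Ψ K) = ∅ := by
  borelize Z
  refine Set.eq_empty_iff_forall_notMem.2 fun v hv => ?_
  let μ : MeasureTheory.Measure Z := MeasureTheory.Measure.addHaar
  have hnull := addHaar_image_not_injective_fderiv_eq_zero μ hYZ
    (hΨ.comp (by fun_prop : Differentiable ℝ fun y => (v, y)))
  have hopen : IsOpen ((fun z => v + τ (-z)) ⁻¹' interior (irregularParams Ψ K)) :=
    isOpen_interior.preimage (by fun_prop)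
  refine (hopen.measure_pos μ ⟨0, by simpa [hτ₀] using hv⟩).ne'
    (MeasureTheory.measure_mono_null (fun z hz => ?_) hnull)
  obtain ⟨y, -, h₀, hinj⟩ := interior_subset hz
  simp only [hτΨ, fderiv_add_const] at h₀ hinj
  exact ⟨y, hinj, add_neg_eq_zero.1 h₀⟩

lemma finite_zeros_of_notMem_irregularParams [FiniteDimensional ℝ Y]
    (hΨ : Differentiable ℝ Ψ) (hK : IsCompact K) {v : V}
    (hv : v ∉ irregularParams Ψ K) : {y ∈ K | Ψ (v, y) = 0}.Finite := by
  have hΨv : Differentiable ℝ fun y => Ψ (v, y) := hΨ.comp (by fun_prop)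
  have hcompact : IsCompact {y ∈ K | Ψ (v, y) = 0} :=
    hK.inter_right (isClosed_eq hΨv.continuous continuous_const)
  refine hcompact.finite (isDiscrete_iff_nhdsNE.2 ?_)
  rintro y ⟨hy, h₀⟩
  have hinj : Function.Injective (fderiv ℝ (fun y => Ψ (v, y)) y) :=
    by_contra fun h => hv ⟨y, hy, h₀, h⟩
  obtain ⟨C, -, hC⟩ := LinearMap.exists_antilipschitzWith
    (fderiv ℝ (fun y => Ψ (v, y)) y : Y →ₗ[ℝ] Z) (LinearMap.ker_eq_bot.2 hinj)
  rw [← disjoint_iff, Filter.disjoint_principal_right]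
  filter_upwards [(hΨv y).hasFDerivAt.eventually_ne (c := 0) ⟨C, hC⟩] with z hz hz'
    using hz hz'.2

lemma eventually_residual_finite_zeros [FiniteDimensional ℝ Y] [FiniteDimensional ℝ Z]
    (hΨ : ContDiff ℝ 1 Ψ) (hYZ : Module.finrank ℝ Y ≤ Module.finrank ℝ Z) {τ : Z → V}
    (hτ : Continuous τ) (hτ₀ : τ 0 = 0) (hτΨ : ∀ v z y, Ψ (v + τ z, y) = Ψ (v, y) + z) :
    ∀ᶠ v in residual V, ∀ K, IsCompact K → {y ∈ K | Ψ (v, y) = 0}.Finite := by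
  have hΨ' := hΨ.differentiable one_ne_zero
  have hregular : ∀ n : ℕ, ∀ᶠ v in residual V, v ∉ irregularParams Ψ (Metric.closedBall 0 n) :=
    fun n => residual_of_dense_open
      (isClosed_irregularParams hΨ (isCompact_closedBall 0 _)).isOpen_compl
      (interior_eq_empty_iff_dense_compl.1
        (interior_irregularParams_eq_empty hΨ' hYZ hτ hτ₀ hτΨ))
  filter_upwards [eventually_countable_forall.2 hregular] with v hv K hK
  obtain ⟨r, hr⟩ := hK.isBounded.subset_closedBall 0
  obtain ⟨n, hn⟩ := exists_nat_ge r
  refine (finite_zeros_of_notMem_irregularParams hΨ' (isCompact_closedBall 0 _) (hv n)).subset ?_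
  exact fun y hy => ⟨Metric.closedBall_subset_closedBall hn (hr hy.1), hy.2⟩

end ParametricTransversality

section FaceChart

variable {N : ℕ} {S : Finset (Fin (N + 1))} {c : Fin (N + 1)}

/-- The affine parametrization of the hull of the vertices in `S` by the barycentric coordinates
other than the one at the vertex `c ∈ S`. -/
def faceChart (S : Finset (Fin (N + 1))) (c : Fin (N + 1)) (w : S.erase c → ℝ) : Fin (N + 1) → ℝ :=
  Pi.single c 1 + ∑ i, w i • (Pi.single i.1 1 - Pi.single c 1)

lemma contDiff_faceChart : ContDiff ℝ 1 (faceChart S c) := by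
  unfold faceChart
  fun_prop

lemma faceChart_of_notMem (hc : c ∈ S) (w : S.erase c → ℝ) {j : Fin (N + 1)} (hj : j ∉ S) :
    faceChart S c w j = 0 := by
  have hjS : ∀ i ∈ S, Pi.single (M := fun _ => ℝ) i 1 j = 0 := fun i hi =>
    Pi.single_eq_of_ne (by rintro rfl; exact hj hi) 1
  simp [faceChart, hjS c hc, fun i : S.erase c => hjS i (Finset.mem_of_mem_erase i.2)]

lemma sum_faceChart (w : S.erase c → ℝ) : ∑ j, faceChart S c w j = 1 := by
  simp [faceChart, Finset.sum_add_distrib, Finset.sum_comm (s := Finset.univ (α := Fin (N + 1))),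
    ← Finset.mul_sum]

lemma faceChart_restrict {x : Fin (N + 1) → ℝ} (hx : x ∈ simpFace S) :
    faceChart S c (fun i => x i) = x := by
  let term (i : Fin (N + 1)) : Fin (N + 1) → ℝ := x i • (Pi.single i 1 - Pi.single c 1)
  have hsum : ∑ i : S.erase c, term i = ∑ i, term i := by
    rw [Finset.sum_coe_sort (S.erase c) term]
    refine Finset.sum_subset (Finset.subset_univ _) fun i _ hi => ?_
    rcases eq_or_ne i c with rfl | hic
    · simp [term]
    · simp [term, hx.2 i fun hiS => hi (Finset.mem_erase.2 ⟨hic, hiS⟩)]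
  calc faceChart S c (fun i => x i) = Pi.single c 1 + ∑ i, term i := congrArg _ hsum
    _ = ∑ i, x i • Pi.single i 1 := by
      simp only [term, smul_sub, Finset.sum_sub_distrib, ← Finset.sum_smul, hx.1.2, one_smul,
        add_sub_cancel]
    _ = x := (pi_eq_sum_univ' x).symm

end FaceChart

section FaceTranslation

variable {N : ℕ} {E : Type*} {𝒮 : Finset (Finset (Fin (N + 1)))}

/-- Vectors at the vertices which are constant on each member of a disjoint family `𝒮`, so that
adding them moves the image of each face in `𝒮` by a prescribed translation. -/
def faceTranslation [AddCommMonoid E] (z : 𝒮 → E) (j : Fin (N + 1)) : E :=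
  ∑ S : 𝒮, if j ∈ S.1 then z S else 0

lemma continuous_faceTranslation [AddCommMonoid E] [TopologicalSpace E] [ContinuousAdd E] :
    Continuous (faceTranslation : (𝒮 → E) → Fin (N + 1) → E) := by
  refine continuous_pi fun j => continuous_finsetSum _ fun S _ => ?_
  split_ifs <;> fun_prop

lemma faceTranslation_zero [AddCommMonoid E] : faceTranslation (0 : 𝒮 → E) = 0 := by
  funext j
  simp [faceTranslation]

lemma faceTranslation_of_mem [AddCommMonoid E]
    (h𝒮 : ∀ S ∈ 𝒮, ∀ T ∈ 𝒮, S ≠ T → Disjoint S T) (z : 𝒮 → E) {S : 𝒮} {j : Fin (N + 1)}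
    (hj : j ∈ S.1) : faceTranslation z j = z S := by
  refine (Finset.sum_eq_single S (fun T _ hTS => if_neg fun hjT => ?_) (by simp)).trans (if_pos hj)
  exact Finset.disjoint_left.1 (h𝒮 T T.2 S S.2 fun h => hTS (Subtype.ext h)) hjT hj

lemma linearCombination_faceTranslation_faceChart [AddCommMonoid E] [Module ℝ E]
    (h𝒮 : ∀ S ∈ 𝒮, ∀ T ∈ 𝒮, S ≠ T → Disjoint S T) (z : 𝒮 → E) {S : 𝒮} {c : Fin (N + 1)}
    (hc : c ∈ S.1) (w : S.1.erase c → ℝ) :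
    Fintype.linearCombination ℝ (faceTranslation z) (faceChart S.1 c w) = z S := by
  have : ∀ j, faceChart S.1 c w j • faceTranslation z j = faceChart S.1 c w j • z S := fun j => by
    by_cases hj : j ∈ S.1
    · rw [faceTranslation_of_mem h𝒮 z hj]
    · simp [faceChart_of_notMem hc w hj]
  rw [Fintype.linearCombination_apply, Finset.sum_congr rfl fun j _ => this j, ← Finset.sum_smul,
    sum_faceChart, one_smul]

end FaceTranslation

section GeneralPositionOfFaces

variable {N : ℕ} {E : Type*} [NormedAddCommGroup E] [NormedSpace ℝ E]
  {𝒮 : Finset (Finset (Fin (N + 1)))}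

/-- A family of pairwise disjoint faces whose images under a generic map to `ℝ^d` meet in a set of
dimension at most `0`: the expected dimension is `∑ S ∈ 𝒮, (|S| - 1) - (|𝒮| - 1) d`. -/
structure HasNonposExpectedDim (d : ℕ) (𝒮 : Finset (Finset (Fin (N + 1)))) : Prop where
  nonempty : ∀ S ∈ 𝒮, S.Nonempty
  disjoint : ∀ S ∈ 𝒮, ∀ T ∈ 𝒮, S ≠ T → Disjoint S T
  sum_card_add_le : ∑ S ∈ 𝒮, S.card + d ≤ 𝒮.card * (d + 1)

/-- The images of disjoint faces meet in finitely many points whenever a dimension count predicts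
it. -/
def IsInGeneralPosition (f : (Fin (N + 1) → ℝ) → E) : Prop :=
  ∀ 𝒮, HasNonposExpectedDim (Module.finrank ℝ E) 𝒮 → (⋂ S ∈ 𝒮, f '' simpFace S).Finite

/-- The equations `g x_S + ∑ j, x_S j • v j = p`, for `S ∈ 𝒮`, saying that `p` lies in the images of
all the faces in `𝒮` under the perturbation of `g` by `v`. The unknowns are the barycentric
coordinates of the points `x_S`, the one at the vertex `c S` being omitted, and `p`. -/
def meetingEquations (g : (Fin (N + 1) → ℝ) → E) (c : Finset (Fin (N + 1)) → Fin (N + 1))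
    (a : (Fin (N + 1) → E) × ((∀ S : 𝒮, S.1.erase (c S) → ℝ) × E)) : 𝒮 → E :=
  fun S => g (faceChart S.1 (c S) (a.2.1 S)) +
    Fintype.linearCombination ℝ a.1 (faceChart S.1 (c S) (a.2.1 S)) - a.2.2

variable {g : (Fin (N + 1) → ℝ) → E} {c : Finset (Fin (N + 1)) → Fin (N + 1)}

lemma contDiff_meetingEquations (hg : ContDiff ℝ 1 g) :
    ContDiff ℝ 1 (meetingEquations (𝒮 := 𝒮) g c) := by
  refine contDiff_pi.2 fun S => ?_
  have hchart : ContDiff ℝ 1 fun a : (Fin (N + 1) → E) × ((∀ S : 𝒮, S.1.erase (c S) → ℝ) × E) =>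
      faceChart S.1 (c S) (a.2.1 S) := contDiff_faceChart.comp (contDiff_pi.1 contDiff_snd.fst S)
  simp only [meetingEquations, Fintype.linearCombination_apply]
  exact ((hg.comp hchart).add (ContDiff.sum fun j _ =>
    (contDiff_pi.1 hchart j).smul (by fun_prop))).sub (by fun_prop)

lemma meetingEquations_add_faceTranslation (hc : ∀ S ∈ 𝒮, c S ∈ S)
    (h𝒮 : ∀ S ∈ 𝒮, ∀ T ∈ 𝒮, S ≠ T → Disjoint S T) (v : Fin (N + 1) → E) (z : 𝒮 → E)
    (y : (∀ S : 𝒮, S.1.erase (c S) → ℝ) × E) :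
    meetingEquations g c (v + faceTranslation z, y) = meetingEquations g c (v, y) + z := by
  funext S
  have := linearCombination_faceTranslation_faceChart h𝒮 z (hc S S.2) (y.1 S)
  simp only [Fintype.linearCombination_apply] at this
  simp only [meetingEquations, Fintype.linearCombination_apply, Pi.add_apply, smul_add,
    Finset.sum_add_distrib, this]
  abel

lemma finrank_unknowns_le [FiniteDimensional ℝ E] (hc : ∀ S ∈ 𝒮, c S ∈ S)
    (h𝒮 : HasNonposExpectedDim (Module.finrank ℝ E) 𝒮) :
    Module.finrank ℝ ((∀ S : 𝒮, S.1.erase (c S) → ℝ) × E) ≤ Module.finrank ℝ (𝒮 → E) := by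
  have hsum : ∑ S ∈ 𝒮, (S.erase (c S)).card + 𝒮.card = ∑ S ∈ 𝒮, S.card := by
    rw [Finset.card_eq_sum_ones, ← Finset.sum_add_distrib]
    exact Finset.sum_congr rfl fun S hS => Finset.card_erase_add_one (hc S hS)
  have := h𝒮.sum_card_add_le
  simp only [Module.finrank_prod, Module.finrank_pi_fintype, Module.finrank_self,
    Finset.sum_const, Finset.card_univ, Fintype.card_coe, smul_eq_mul, mul_one]
  rw [Finset.sum_coe_sort 𝒮 fun S => (S.erase (c S)).card]
  linarith

lemma eventually_residual_finite_iInter_image [FiniteDimensional ℝ E] (hg : ContDiff ℝ 1 g)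
    (h𝒮 : HasNonposExpectedDim (Module.finrank ℝ E) 𝒮) :
    ∀ᶠ v in residual (Fin (N + 1) → E),
      (⋂ S ∈ 𝒮, (fun x => g x + Fintype.linearCombination ℝ v x) '' simpFace S).Finite := by
  rcases 𝒮.eq_empty_or_nonempty with rfl | ⟨S₀, hS₀⟩
  · have : Subsingleton E := Module.finrank_zero_iff.1 (by simpa using h𝒮.sum_card_add_le)
    exact .of_forall fun _ => Set.toFinite _
  choose! c hc using h𝒮.nonempty
  filter_upwards [eventually_residual_finite_zeros (contDiff_meetingEquations (𝒮 := 𝒮) (c := c) hg)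
    (finrank_unknowns_le hc h𝒮) continuous_faceTranslation faceTranslation_zero
    (meetingEquations_add_faceTranslation hc h𝒮.disjoint)] with v hv
  have hcompact : IsCompact ((fun x => g x + Fintype.linearCombination ℝ v x) '' stdSimp N) :=
    (isCompact_stdSimplex ℝ _).image (by have := hg.continuous; fun_prop)
  refine ((hv _ (isCompact_Icc (a := 0) (b := 1) |>.prod hcompact)).image Prod.snd).subset ?_
  intro p hp
  simp only [Set.mem_iInter] at hp
  choose! x hx hxp using hp
  refine ⟨(fun S i => x S i, p), ⟨⟨⟨fun S i => (hx S S.2).1.1 i, fun S i => ?_⟩,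
    x S₀, (hx S₀ hS₀).1, hxp S₀ hS₀⟩, ?_⟩, rfl⟩
  · exact (Finset.single_le_sum (fun j _ => (hx S S.2).1.1 j) (Finset.mem_univ i.1)).trans_eq
      (hx S S.2).1.2
  · funext S
    simp only [meetingEquations, faceChart_restrict (hx S S.2), Pi.zero_apply, sub_eq_zero]
    exact hxp S S.2

lemma norm_linearCombination_le (v : Fin (N + 1) → E) {x : Fin (N + 1) → ℝ} (hx : x ∈ stdSimp N) :
    ‖Fintype.linearCombination ℝ v x‖ ≤ ‖v‖ := by
  rw [← mem_closedBall_zero_iff]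
  exact (convex_closedBall 0 ‖v‖).sum_mem (fun j _ => hx.1 j) hx.2
    fun j _ => mem_closedBall_zero_iff.2 (norm_le_pi_norm v j)

lemma exists_isInGeneralPosition_norm_sub_lt [FiniteDimensional ℝ E] {f : (Fin (N + 1) → ℝ) → E}
    (hf : Continuous f) {ε : ℝ} (hε : 0 < ε) :
    ∃ F, Continuous F ∧ IsInGeneralPosition F ∧ ∀ x ∈ stdSimp N, ‖F x - f x‖ < ε := by
  obtain ⟨g, hg, hgf, -⟩ := hf.exists_contDiff_approx 1 (continuous_const (y := ε / 2))
    fun _ => half_pos hε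
  replace hg : ContDiff ℝ 1 g := hg
  have hgeneric : ∀ᶠ v in residual (Fin (N + 1) → E),
      IsInGeneralPosition fun x => g x + Fintype.linearCombination ℝ v x :=
    Filter.eventually_all.2 fun _ => Filter.eventually_imp_distrib_left.2
      (eventually_residual_finite_iInter_image hg)
  obtain ⟨v, hv, hvε⟩ := (dense_of_mem_residual hgeneric).exists_dist_lt 0 (half_pos hε)
  rw [dist_zero_left] at hvε
  refine ⟨_, ?_, hv, fun x hx => ?_⟩
  · have := hg.continuous
    fun_prop
  · calc ‖g x + Fintype.linearCombination ℝ v x - f x‖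
        = ‖(g x - f x) + Fintype.linearCombination ℝ v x‖ := by congr 1; abel
      _ ≤ ‖g x - f x‖ + ‖Fintype.linearCombination ℝ v x‖ := norm_add_le _ _
      _ < ε / 2 + ε / 2 :=
        add_lt_add_of_lt_of_le (dist_eq_norm (g x) _ ▸ hgf x)
          ((norm_linearCombination_le v hx).trans hvε.le)
      _ = ε := add_halves ε

lemma exists_seq_isInGeneralPosition_tendstoUniformlyOn [FiniteDimensional ℝ E]
    {f : (Fin (N + 1) → ℝ) → E} {K : Set (Fin (N + 1) → ℝ)} (hK : IsClosed K)
    (hKs : K ⊆ stdSimp N) (hf : ContinuousOn f K) :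
    ∃ F : ℕ → (Fin (N + 1) → ℝ) → E, (∀ n, Continuous (F n)) ∧ (∀ n, IsInGeneralPosition (F n)) ∧
      TendstoUniformlyOn F f Filter.atTop K := by
  have : TietzeExtension.{0} E := .of_tvs ℝ
  obtain ⟨f₀, hf₀⟩ := ContinuousMap.exists_restrict_eq hK ⟨_, hf.domRestrict⟩
  choose F hF hFgen hFf₀ using fun n : ℕ =>
    exists_isInGeneralPosition_norm_sub_lt f₀.continuous (Nat.one_div_pos_of_nat (α := ℝ) (n := n))
  refine ⟨F, hF, hFgen, Metric.tendstoUniformlyOn_iff.2 fun ε hε => ?_⟩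
  filter_upwards [tendsto_one_div_add_atTop_nhds_zero_nat.eventually_lt_const hε] with n hn x hx
  have hf₀x : f₀ x = f x := DFunLike.congr_fun hf₀ ⟨x, hx⟩
  rw [dist_comm, dist_eq_norm, ← hf₀x]
  exact (hFf₀ n x (hKs hx)).trans hn

end GeneralPositionOfFaces

section Skeleta

variable {N : ℕ}

lemma isCompact_simpFace (S : Finset (Fin (N + 1))) : IsCompact (simpFace S) := by
  refine (isCompact_stdSimplex ℝ _).inter_right (t := {x | ∀ i ∉ S, x i = 0}) ?_
  simp only [Set.ofPred_forall]
  exact isClosed_iInter fun i => isClosed_iInter fun _ =>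
    isClosed_eq (continuous_apply i) continuous_const

lemma isCompact_simpFaceBoundary (S : Finset (Fin (N + 1))) :
    IsCompact (simpFaceBoundary S) := by
  have : simpFaceBoundary S = simpFace S ∩ ⋃ i ∈ S, {x | x i = 0} := by
    ext x
    simp [simpFaceBoundary]
  rw [this]
  exact (isCompact_simpFace S).inter_right (isClosed_biUnion_finset fun i _ =>
    isClosed_eq (continuous_apply i) continuous_const)

lemma mem_simpFace_iff {S : Finset (Fin (N + 1))} {x : Fin (N + 1) → ℝ} :
    x ∈ simpFace S ↔ x ∈ stdSimp N ∧ Finset.univ.filter (x · ≠ 0) ⊆ S := by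
  simp [simpFace, Finset.subset_iff, not_imp_comm]

lemma skel_eq_iUnion (N k : ℕ) :
    skel N k = ⋃ S : {S : Finset (Fin (N + 1)) // S.card ≤ k + 1}, simpFace S.1 := by
  ext x
  have hcard : {i | x i ≠ 0}.ncard = (Finset.univ.filter (x · ≠ 0)).card := by
    rw [← Set.ncard_coe_finset]
    simp
  simp only [skel, Set.mem_iUnion, Subtype.exists, exists_prop, mem_simpFace_iff,
    Set.mem_ofPred_eq, hcard]
  exact ⟨fun ⟨hx, hc⟩ => ⟨_, hc, hx, subset_rfl⟩,
    fun ⟨_, hS, hx, hsub⟩ => ⟨hx, (Finset.card_le_card hsub).trans hS⟩⟩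

lemma simpFace_subset_skel {S : Finset (Fin (N + 1))} {k : ℕ} (hS : S.card ≤ k + 1) :
    simpFace S ⊆ skel N k := by
  rw [skel_eq_iUnion]
  exact Set.subset_iUnion (fun S : {S : Finset (Fin (N + 1)) // S.card ≤ k + 1} => simpFace S.1)
    ⟨S, hS⟩

lemma simpFaceBoundary_subset_skel {S : Finset (Fin (N + 1))} {k : ℕ} (hS : S.card ≤ k + 2) :
    simpFaceBoundary S ⊆ skel N k := by
  rintro x ⟨hx, i, hi, hxi⟩
  refine simpFace_subset_skel (S := S.erase i) ?_ ⟨hx.1, fun j hj => ?_⟩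
  · rw [Finset.card_erase_of_mem hi]
    omega
  · rcases eq_or_ne j i with rfl | hji
    · exact hxi
    · exact hx.2 j fun h => hj (Finset.mem_erase.2 ⟨hji, h⟩)

lemma isClosed_skel (N k : ℕ) : IsClosed (skel N k) := by
  rw [skel_eq_iUnion]
  exact isClosed_iUnion_of_finite fun S => (isCompact_simpFace S.1).isClosed

lemma exists_continuousOn_skel {Y : Type*} [TopologicalSpace Y] {k : ℕ}
    {F : (Fin (N + 1) → ℝ) → Y} (hF : ∀ S, S.card ≤ k → ContinuousOn F (simpFace S))
    (G : ∀ S : Finset (Fin (N + 1)), C(simpFace S, Y))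
    (hGF : ∀ S, S.card = k + 1 → ∀ x (hx : x ∈ simpFaceBoundary S), G S ⟨x, hx.1⟩ = F x) :
    ∃ g : (Fin (N + 1) → ℝ) → Y, ContinuousOn g (skel N k) ∧
      (∀ S, S.card ≤ k → Set.EqOn g F (simpFace S)) ∧
      ∀ S, S.card = k + 1 → ∀ x : simpFace S, g x = G S x := by
  classical
  let supp : (Fin (N + 1) → ℝ) → Finset (Fin (N + 1)) := fun x => Finset.univ.filter (x · ≠ 0)
  let g : (Fin (N + 1) → ℝ) → Y := fun x =>
    if hx : x ∈ stdSimp N ∧ (supp x).card = k + 1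
    then G (supp x) ⟨x, mem_simpFace_iff.2 ⟨hx.1, subset_rfl⟩⟩ else F x
  have hlow : ∀ S, S.card ≤ k → Set.EqOn g F (simpFace S) := fun S hS x hx => dif_neg fun h => by
    have := Finset.card_le_card (mem_simpFace_iff.1 hx).2
    exact absurd h.2 (by simp only [supp]; omega)
  have htop : ∀ S, S.card = k + 1 → ∀ x : simpFace S, g x = G S x := by
    rintro S hS ⟨x, hx⟩
    have hsub : supp x ⊆ S := (mem_simpFace_iff.1 hx).2
    rcases hsub.eq_or_ssubset with rfl | hlt
    · exact dif_pos ⟨hx.1, hS⟩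
    · obtain ⟨i, hi, hxi⟩ := Finset.exists_of_ssubset hlt
      rw [hGF S hS x ⟨hx, i, hi, by simpa [supp] using hxi⟩]
      exact dif_neg fun h => (Finset.card_lt_card hlt).ne (h.2.trans hS.symm)
  refine ⟨g, ?_, hlow, htop⟩
  rw [skel_eq_iUnion]
  refine (locallyFinite_of_finite _).continuousOn_iUnion
    (fun S => (isCompact_simpFace S.1).isClosed) fun S => ?_
  rcases Nat.lt_succ_iff_lt_or_eq.1 (Nat.lt_succ_of_le S.2) with h | h
  · exact (hF S.1 (by omega)).congr (hlow S.1 (by omega))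
  · exact continuousOn_iff_continuous_domRestrict.2
      ((G S.1).continuous.congr fun x => (htop S.1 h x).symm)

end Skeleta

section Winding

variable {N d : ℕ} {f f' : (Fin (N + 1) → ℝ) → Euc d} {S : Finset (Fin (N + 1))} {p p' : Euc d}

lemma not_inWne_iff : ¬ InWne d f S p ↔
    ∃ g : C(simpFaceBoundary S, ({p}ᶜ : Set (Euc d))),
      (∀ x, (g x : Euc d) = f x) ∧ g.Nullhomotopic := by
  simp only [InWne, not_or, not_not]
  refine ⟨fun ⟨_, g, y, hg, h⟩ => ⟨g, hg, y, h⟩, fun ⟨g, hg, y, h⟩ => ⟨?_, g, y, hg, h⟩⟩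
  rintro ⟨x, hx, hxp⟩
  exact (g ⟨x, hx⟩).2 ((hg ⟨x, hx⟩).trans hxp)

lemma extendsAvoiding_of_not_inWne (hS : S.Nonempty) (hSd : S.card + 1 < 2 * d)
    (hf : ContinuousOn f (simpFaceBoundary S)) {P : Finset (Euc d)}
    (hP : ∀ p ∈ P, ¬ InWne d f S p) :
    ExtendsAvoiding (Set.inclusion (Set.sep_subset _ _) : simpFaceBoundary S → simpFace S)
      (fun x => f x) P := by
  obtain ⟨c, hc⟩ := hS
  have : CompactSpace (simpFace S) := isCompact_iff_compactSpace.1 (isCompact_simpFace S)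
  have : TietzeExtension.{0} (Euc d) := .of_tvs ℝ
  have hι : Topology.IsClosedEmbedding
      (Set.inclusion (Set.sep_subset _ _) : simpFaceBoundary S → simpFace S) :=
    have := isCompact_iff_compactSpace.1 (isCompact_simpFaceBoundary S)
    (continuous_inclusion _).isClosedEmbedding (Set.inclusion_injective _)
  have he : Topology.IsClosedEmbedding fun (x : simpFace S) (i : S.erase c) => x.1 i :=
    Continuous.isClosedEmbedding
      (continuous_pi fun i => (continuous_apply i.1).comp continuous_subtype_val)
      fun x y hxy => Subtype.ext <| by
        rw [← faceChart_restrict (c := c) x.2, ← faceChart_restrict (c := c) y.2, hxy]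
  refine extendsAvoiding_finset hι he ?_ hf.domRestrict fun p hp => ?_
  · have := Finset.card_erase_add_one hc
    simp only [Module.finrank_fintype_fun_eq_card, Fintype.card_coe, finrank_euclideanSpace_fin]
    omega
  obtain ⟨g, hgf, y, ⟨h⟩⟩ := not_inWne_iff.1 (hP p hp)
  have hf_eq : (simpFaceBoundary S).domRestrict f = fun x => (h.symm (1, x)).1 :=
    funext fun x => by simp [hgf]
  rw [hf_eq]
  exact ExtendsAvoiding.of_homotopy hι isClosed_singleton
    ⟨fun z => (h.symm z).1, by fun_prop⟩ (fun z => (h.symm z).2)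
    ⟨ContinuousMap.const _ y.1, fun _ => by simp, fun _ => y.2⟩

lemma not_inWne_of_norm_sub_lt (hf : ContinuousOn f (simpFaceBoundary S))
    (hf' : ContinuousOn f' (simpFaceBoundary S))
    (hlt : ∀ x ∈ simpFaceBoundary S, ‖(f' x - p') - (f x - p)‖ < ‖f x - p‖)
    (h : ¬ InWne d f S p) : ¬ InWne d f' S p' := by
  obtain ⟨g, hg, hnull⟩ := not_inWne_iff.1 h
  let φ : C(simpFaceBoundary S, Euc d) := ⟨fun x => f x, hf.domRestrict⟩
  let φ' : C(simpFaceBoundary S, Euc d) := ⟨fun x => f' x, hf'.domRestrict⟩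
  have hφ : ∀ x, φ x = f x := fun _ => rfl
  have hφ' : ∀ x, φ' x = f' x := fun _ => rfl
  let H (z : unitInterval × simpFaceBoundary S) : Euc d :=
    p' + AffineMap.lineMap (φ' z.2 - p') (φ z.2 - p) (z.1 : ℝ)
  have hH : ∀ z, H z ∈ ({p'}ᶜ : Set (Euc d)) := fun z hz => by
    have hball : AffineMap.lineMap (φ' z.2 - p') (φ z.2 - p) (z.1 : ℝ) ∈
        Metric.ball (φ z.2 - p) ‖φ z.2 - p‖ :=
      (convex_ball _ _).lineMap_mem (mem_ball_iff_norm.2 (hlt _ z.2.2))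
        (Metric.mem_ball_self ((norm_nonneg _).trans_lt (hlt _ z.2.2))) z.1.2
    rw [add_eq_left.1 hz, mem_ball_iff_norm, zero_sub, norm_neg] at hball
    exact hball.false
  have hHc : Continuous H := by
    simp only [H, AffineMap.lineMap_apply_module]
    fun_prop
  let g' : C(simpFaceBoundary S, ({p'}ᶜ : Set (Euc d))) := ⟨fun x => ⟨H (0, x), hH _⟩, by fun_prop⟩
  let T : C(({p}ᶜ : Set (Euc d)), ({p'}ᶜ : Set (Euc d))) :=
    ⟨fun z => ⟨p' + (z.1 - p), fun h => z.2 (sub_eq_zero.1 (add_eq_left.1 h))⟩, by fun_prop⟩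
  have hgg' : g'.Homotopic (T.comp g) :=
    ⟨⟨⟨fun z => ⟨H z, hH z⟩, by fun_prop⟩, fun _ => rfl,
      fun x => Subtype.ext (by simp [H, T, hφ, hg])⟩⟩
  obtain ⟨y, hy⟩ := hnull
  exact not_inWne_iff.2 ⟨g', fun x => by simp [g', H, hφ'], T y, hgg'.trans (.comp (.refl T) hy)⟩

lemma eventually_not_inWne {ι : Type*} {l : Filter ι} {F : ι → (Fin (N + 1) → ℝ) → Euc d}
    {r : ι → Euc d} (hFf : TendstoUniformlyOn F f l (simpFaceBoundary S))
    (hF : ∀ i, ContinuousOn (F i) (simpFaceBoundary S))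
    (hf : ContinuousOn f (simpFaceBoundary S)) (hr : Filter.Tendsto r l (nhds p))
    (h : ¬ InWne d f S p) : ∀ᶠ i in l, ¬ InWne d (F i) S (r i) := by
  obtain ⟨δ, hδ, hfar⟩ := (isCompact_simpFaceBoundary S).exists_forall_le'
    (hf.sub continuousOn_const).norm (a := 0) fun x hx => norm_pos_iff.2 <| sub_ne_zero.2
      fun hxp => h (.inl ⟨x, hx, hxp⟩)
  filter_upwards [Metric.tendstoUniformlyOn_iff.1 hFf _ (half_pos hδ),
    Metric.tendsto_nhds.1 hr _ (half_pos hδ)] with i hi hri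
  refine not_inWne_of_norm_sub_lt hf (hF i) (fun x hx => ?_) h
  calc ‖(F i x - r i) - (f x - p)‖ = ‖(F i x - f x) - (r i - p)‖ := by congr 1; abel
    _ ≤ ‖F i x - f x‖ + ‖r i - p‖ := norm_sub_le _ _
    _ < δ / 2 + δ / 2 := add_lt_add
      (by simpa [dist_eq_norm, norm_sub_rev] using hi x hx) (by simpa [dist_eq_norm] using hri)
    _ = δ := add_halves δ
    _ ≤ ‖f x - p‖ := hfar x hx

end Winding

section WindingPartitions

variable {N k q : ℕ}

lemma hasNonposExpectedDim_filter_card_le {P : Finset (Finset (Fin (N + 1)))}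
    (hN : N + k < (k + 1) * P.card) (hne : ∀ S ∈ P, S.Nonempty)
    (hdisj : ∀ S ∈ P, ∀ T ∈ P, S ≠ T → Disjoint S T) (hle : ∀ S ∈ P, S.card ≤ k + 1) :
    HasNonposExpectedDim k (P.filter (·.card ≤ k)) := by
  refine ⟨fun S hS => hne S (Finset.mem_filter.1 hS).1, fun S hS T hT =>
    hdisj S (Finset.mem_filter.1 hS).1 T (Finset.mem_filter.1 hT).1, ?_⟩
  have htotal : ∑ S ∈ P, S.card ≤ N + 1 := by
    calc ∑ S ∈ P, S.card = (P.biUnion id).card := (Finset.card_biUnion hdisj).symm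
      _ ≤ N + 1 := (Finset.card_le_univ _).trans_eq (Fintype.card_fin _)
  have hlarge : ∑ S ∈ P with ¬ S.card ≤ k, S.card = (P.filter (¬ ·.card ≤ k)).card * (k + 1) :=
    Finset.sum_const_nat fun S hS =>
      (hle S (Finset.mem_filter.1 hS).1).antisymm (not_le.1 (Finset.mem_filter.1 hS).2)
  rw [← Finset.sum_filter_add_sum_filter_not P (·.card ≤ k), hlarge] at htotal
  rw [← Finset.card_filter_add_card_filter_not (s := P) (·.card ≤ k)] at hN
  linarith

lemma HasNonposExpectedDim.ne_empty {𝒮 : Finset (Finset (Fin (N + 1)))}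
    (h : HasNonposExpectedDim k 𝒮) (hk : 0 < k) : 𝒮 ≠ ∅ := by
  rintro rfl
  simpa [hk.ne'] using h.sum_card_add_le

lemma exists_continuousOn_skel_isWindingPartition (hk : 3 ≤ k) (hN : N + k < (k + 1) * q)
    {F : (Fin (N + 1) → ℝ) → Euc k} (hF : Continuous F) (hgen : IsInGeneralPosition F) :
    ∃ g : (Fin (N + 1) → ℝ) → Euc k, ContinuousOn g (skel N k) ∧
      ∀ P, IsTverbergPartition q g P → (∀ S ∈ P, S.card ≤ k + 1) → IsWindingPartition k q F P := by
  classical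
  have hfin : (⋃ 𝒮 : {𝒮 : Finset (Finset (Fin (N + 1))) // HasNonposExpectedDim k 𝒮},
      ⋂ S ∈ 𝒮.1, F '' simpFace S).Finite :=
    Set.finite_iUnion fun 𝒮 => hgen 𝒮.1 (by simpa using 𝒮.2)
  have hext : ∀ S : Finset (Fin (N + 1)), S.card = k + 1 → ∃ G : C(simpFace S, Euc k),
      (∀ x (hx : x ∈ simpFaceBoundary S), G ⟨x, hx.1⟩ = F x) ∧
        ∀ x, G x ∈ hfin.toFinset → InWne k F S (G x) := fun S hS => by
    obtain ⟨G, hGF, hG⟩ := extendsAvoiding_of_not_inWne (Finset.card_pos.1 (by omega)) (by omega)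
      hF.continuousOn (S := S) (P := hfin.toFinset.filter (¬ InWne k F S ·))
      fun p hp => (Finset.mem_filter.1 hp).2
    exact ⟨G, fun x hx => hGF ⟨x, hx⟩, fun x hx => by_contra fun hW =>
      hG x (Finset.mem_coe.2 (Finset.mem_filter.2 ⟨hx, hW⟩))⟩
  choose! G hGF hGW using hext
  obtain ⟨g, hg, hlow, htop⟩ := exists_continuousOn_skel (fun _ _ => hF.continuousOn) G hGF
  refine ⟨g, hg, fun P ⟨hcard, hne, hdisj, p, hp⟩ hle => ?_⟩
  rw [Set.mem_iInter₂] at hp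
  have hpF : ∀ S ∈ P, S.card ≤ k → p ∈ F '' simpFace S := fun S hS hSk =>
    (hlow S hSk).image_eq ▸ hp S hS
  have hpfin : p ∈ hfin.toFinset := by
    refine hfin.mem_toFinset.2 (Set.mem_iUnion.2
      ⟨⟨_, hasNonposExpectedDim_filter_card_le (hcard ▸ hN) hne hdisj hle⟩, ?_⟩)
    exact Set.mem_iInter₂.2 fun S hS => hpF S (Finset.mem_filter.1 hS).1 (Finset.mem_filter.1 hS).2
  refine ⟨hcard, hne, hle, hdisj, p, fun S hS => ⟨hpF S hS, fun hSk => ?_⟩⟩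
  obtain ⟨x, hx, rfl⟩ := hp S hS
  have hgx := htop S hSk ⟨x, hx⟩
  rw [hgx] at hpfin ⊢
  exact hGW S hSk _ hpfin

lemma exists_tendsto_of_forall_mem_image {ι X Y : Type*} [TopologicalSpace X] [UniformSpace Y]
    {u : Ultrafilter ι} {F : ι → X → Y} {f : X → Y} {K : Set X} {r : ι → Y} (hK : IsCompact K)
    (hf : ContinuousOn f K) (hFf : TendstoUniformlyOn F f u K)
    (hr : ∀ᶠ i in (u : Filter ι), r i ∈ F i '' K) :
    ∃ y ∈ f '' K, Filter.Tendsto r u (nhds y) := by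
  obtain ⟨x, hx⟩ := hr.choice
  have hxK : Filter.Tendsto x u (Filter.principal K) :=
    Filter.tendsto_principal.2 (hx.mono fun _ h => h.1)
  obtain ⟨x₀, hx₀, hlim⟩ := hK.ultrafilter_le_nhds (u.map x) hxK
  refine ⟨f x₀, Set.mem_image_of_mem f hx₀, ?_⟩
  exact (hFf.tendsto_comp (hf x₀ hx₀) (Filter.tendsto_inf.2 ⟨hlim, hxK⟩)).congr'
    (hx.mono fun _ h => h.2)

lemma exists_isWindingPartition_of_tendstoUniformlyOn (hk : 0 < k) (hN : N + k < (k + 1) * q)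
    {ι : Type*} {l : Filter ι} [l.NeBot] {F : ι → (Fin (N + 1) → ℝ) → Euc k}
    {f : (Fin (N + 1) → ℝ) → Euc k} (hFf : TendstoUniformlyOn F f l (skel N (k - 1)))
    (hF : ∀ i, ContinuousOn (F i) (skel N (k - 1)))
    (hW : ∀ i, ∃ P, IsWindingPartition k q (F i) P) : ∃ P, IsWindingPartition k q f P := by
  choose P hcard hne hle hdisj p hp using hW
  let u := Ultrafilter.of l
  replace hFf : TendstoUniformlyOn F f u (skel N (k - 1)) := fun v hv =>
    Ultrafilter.of_le l (hFf v hv)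
  have hf : ContinuousOn f (skel N (k - 1)) := hFf.continuousOn (.of_forall hF)
  have hface : ∀ S : Finset (Fin (N + 1)), S.card ≤ k → simpFace S ⊆ skel N (k - 1) :=
    fun S hS => simpFace_subset_skel (by omega)
  obtain ⟨Q, hQ⟩ := (u.map P).eq_pure_of_finite
  replace hQ : ∀ᶠ i in (u : Filter ι), P i = Q := by
    have : {Q} ∈ u.map P := hQ ▸ Set.mem_singleton Q
    exact this
  obtain ⟨i₀, rfl⟩ := hQ.exists
  have hlim : ∀ S ∈ P i₀, S.card ≤ k → ∃ y ∈ f '' simpFace S, Filter.Tendsto p u (nhds y) :=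
    fun S hS hSk => exists_tendsto_of_forall_mem_image (isCompact_simpFace S)
      (hf.mono (hface S hSk)) (hFf.mono (hface S hSk))
      (hQ.mono fun i hi => (hp i S (hi ▸ hS)).1 hSk)
  obtain ⟨S₀, hS₀⟩ := Finset.nonempty_iff_ne_empty.2 <|
    (hasNonposExpectedDim_filter_card_le (hcard i₀ ▸ hN) (hne i₀) (hdisj i₀) (hle i₀)).ne_empty hk
  obtain ⟨p₀, -, hp₀⟩ := hlim S₀ (Finset.mem_filter.1 hS₀).1 (Finset.mem_filter.1 hS₀).2
  refine ⟨P i₀, hcard i₀, hne i₀, hle i₀, hdisj i₀, p₀, fun S hS => ⟨fun hSk => ?_, fun hSk => ?_⟩⟩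
  · obtain ⟨y, hy, hpy⟩ := hlim S hS hSk
    rwa [tendsto_nhds_unique hp₀ hpy]
  · have hsub : simpFaceBoundary S ⊆ skel N (k - 1) := simpFaceBoundary_subset_skel (by omega)
    by_contra hnot
    obtain ⟨i, hi, hiQ⟩ := ((eventually_not_inWne (hFf.mono hsub) (fun i => (hF i).mono hsub)
      (hf.mono hsub) hp₀ hnot).and hQ).exists
    exact hi ((hp i S (hiQ ▸ hS)).2 hSk)

end WindingPartitions

/-- For `k ≥ 3`, the `k`-Skeleton Conjecture implies the Winding Number
Conjecture in dimension `k`. -/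
theorem dSkeleton_implies_winding_high_dim (k q : ℕ) (hk : 3 ≤ k) (hq : 1 ≤ q)
    (H : ∀ g : (Fin ((k+1)*(q-1)+1) → ℝ) → Euc k,
      ContinuousOn g (skel ((k+1)*(q-1)) k) →
      ∃ P : Finset (Finset (Fin ((k+1)*(q-1)+1))),
        IsTverbergPartition q g P ∧ ∀ S ∈ P, S.card ≤ k + 1) :
    ∀ f : (Fin ((k+1)*(q-1)+1) → ℝ) → Euc k,
      ContinuousOn f (skel ((k+1)*(q-1)) (k-1)) →
      ∃ P : Finset (Finset (Fin ((k+1)*(q-1)+1))), IsWindingPartition k q f P := by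
  intro f hf
  have hN : (k + 1) * (q - 1) + k < (k + 1) * q := by
    obtain ⟨r, rfl⟩ := Nat.exists_eq_add_of_le' hq
    simp only [Nat.add_sub_cancel]
    linarith
  obtain ⟨F, hF, hgen, hFf⟩ := exists_seq_isInGeneralPosition_tendstoUniformlyOn
    (isClosed_skel _ _) (Set.sep_subset _ _) hf
  refine exists_isWindingPartition_of_tendstoUniformlyOn (by omega) hN hFf
    (fun n => (hF n).continuousOn) fun n => ?_
  obtain ⟨g, hg, hgW⟩ := exists_continuousOn_skel_isWindingPartition hk hN (hF n) (hgen n)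
  obtain ⟨P, hP, hle⟩ := H g hg
  exact ⟨P, hgW P hP hle⟩
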